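/- For n ≥ 2 and x ∈ ℝⁿ \ {0}, and any continuous function φ : ℝ → ℝ, the Funk–Hecke identity holds: ∫_{S^{n-1}} φ(x·θ) dS(θ) = |S^{n-2}| · |x|^{2-n} ∫_{-|x|}^{|x|} (|x|² - t²)^{(n-3)/2} φ(t) dt. -/

import Mathlib

open MeasureTheory
open scoped RealInnerProductSpace

lemma fh_L1 (m : ℕ) (x : EuclideanSpace ℝ (Fin (m+1))) (φ : ℝ → ℝ) :
    ∫ y : EuclideanSpace ℝ (Fin (m+1)), φ (⟪x, y⟫ / ‖y‖) * Real.exp (-‖y‖^2)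
    = (∫ θ : Metric.sphere (0 : EuclideanSpace ℝ (Fin (m+1))) 1,
        φ ⟪x, (θ : EuclideanSpace ℝ (Fin (m+1)))⟫ ∂(volume.toSphere)) *
      ∫ s in Set.Ioi (0:ℝ), s ^ m * Real.exp (-s^2) := by
  have hd : Module.finrank ℝ (EuclideanSpace ℝ (Fin (m+1))) - 1 = m := by simp
  calc
    _ = ∫ y : ({(0)}ᶜ : Set (EuclideanSpace ℝ (Fin (m+1)))), φ (⟪x, y.1⟫ / ‖y.1‖) * Real.exp (-‖y.1‖^2) ∂(volume.comap Subtype.val) := by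
      rw [integral_subtype_comap (measurableSet_singleton _).compl
        fun y : (EuclideanSpace ℝ (Fin (m+1))) ↦ φ (⟪x, y⟫ / ‖y‖) * Real.exp (-‖y‖^2), restrict_compl_singleton]
    _ = ∫ p : Metric.sphere (0 : (EuclideanSpace ℝ (Fin (m+1)))) 1 × Set.Ioi (0:ℝ), φ ⟪x, (p.1 : (EuclideanSpace ℝ (Fin (m+1))))⟫ * Real.exp (-(p.2:ℝ)^2)
          ∂(volume : Measure (EuclideanSpace ℝ (Fin (m+1)))).toSphere.prod (.volumeIoiPow (Module.finrank ℝ (EuclideanSpace ℝ (Fin (m+1))) - 1)) := by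
      rw [← (volume : Measure (EuclideanSpace ℝ (Fin (m+1)))).measurePreserving_homeomorphUnitSphereProd.integral_comp
        (Homeomorph.measurableEmbedding _)]
      refine integral_congr_ae (.of_forall fun y => ?_)
      simp [inner_smul_right, div_eq_inv_mul]
    _ = _ := by
      rw [integral_prod_mul (fun θ : Metric.sphere (0 : (EuclideanSpace ℝ (Fin (m+1)))) 1 => φ ⟪x, (θ : (EuclideanSpace ℝ (Fin (m+1))))⟫)
        (fun s : Set.Ioi (0:ℝ) => Real.exp (-(s:ℝ)^2)), hd]
      congr 1
      simp only [Measure.volumeIoiPow, ENNReal.ofReal]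
      rw [integral_withDensity_eq_integral_smul,
        integral_subtype_comap measurableSet_Ioi fun a : ℝ ↦ Real.toNNReal (a ^ m) • Real.exp (-a^2),
        setIntegral_congr_fun measurableSet_Ioi fun x hx ↦ ?_]
      · rw [NNReal.smul_def, Real.coe_toNNReal _ (pow_nonneg hx.out.le _), smul_eq_mul]
      · exact (measurable_subtype_coe.pow_const _).real_toNNReal

lemma fh_L2 (m : ℕ) (x : EuclideanSpace ℝ (Fin (m+1))) (φ : ℝ → ℝ) :
    ∫ y : EuclideanSpace ℝ (Fin (m+1)), φ (⟪x, y⟫ / ‖y‖) * Real.exp (-‖y‖^2)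
    = ∫ p : ℝ × EuclideanSpace ℝ (Fin m), φ (‖x‖ * p.1 / √(p.1^2 + ‖p.2‖^2)) *
        Real.exp (-(p.1^2+‖p.2‖^2)) := by
  set e : EuclideanSpace ℝ (Fin (m+1)) := EuclideanSpace.single 0 ‖x‖ with he
  have hn : ‖x‖ = ‖e‖ := by simp [he]
  set R := (Submodule.span ℝ {x - e})ᗮ.reflection with hR
  have hRx : R x = e := Submodule.reflection_sub hn
  have h1 := (R.symm.measurePreserving).integral_comp R.symm.toHomeomorph.measurableEmbedding
    (fun y : EuclideanSpace ℝ (Fin (m+1)) => φ (⟪x, y⟫ / ‖y‖) * Real.exp (-‖y‖^2))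
  rw [← h1]
  let T : ℝ × EuclideanSpace ℝ (Fin m) ≃ᵐ EuclideanSpace ℝ (Fin (m+1)) :=
    ((MeasurableEquiv.refl ℝ).prodCongr (MeasurableEquiv.toLp 2 (Fin m → ℝ)).symm).trans
      ((MeasurableEquiv.piFinSuccAbove (fun _ : Fin (m+1) => ℝ) 0).symm.trans
        (MeasurableEquiv.toLp 2 (Fin (m+1) → ℝ)))
  have hT : MeasurePreserving T volume volume := by
    refine MeasurePreserving.trans (μb := volume)
      (e := (MeasurableEquiv.refl ℝ).prodCongr (MeasurableEquiv.toLp 2 (Fin m → ℝ)).symm) ?_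
      (MeasurePreserving.trans (μb := volume) ?_ ?_)
    · exact (MeasurePreserving.id _).prod (PiLp.volume_preserving_ofLp (Fin m))
    · exact (volume_preserving_piFinSuccAbove (fun _ : Fin (m+1) => ℝ) 0).symm
    · exact PiLp.volume_preserving_toLp _
  rw [← hT.integral_comp T.measurableEmbedding]
  refine integral_congr_ae (.of_forall fun p => ?_)
  have hT0 : T p 0 = p.1 := rfl
  have hTs : ∀ i : Fin m, T p i.succ = p.2 i := fun i => rfl
  have hi : ⟪x, R.symm (T p)⟫ = ‖x‖ * p.1 := by
    rw [← R.inner_map_map, hRx, R.apply_symm_apply, he, EuclideanSpace.inner_single_left]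
    simp [hT0]
  have hnT : ‖T p‖ = √(p.1^2 + ‖p.2‖^2) := by
    rw [EuclideanSpace.norm_eq, EuclideanSpace.norm_sq_eq, Fin.sum_univ_succ]
    simp [hT0, hTs]
  simp only [hi, R.symm.norm_map, hnT]
  rw [Real.sq_sqrt (by positivity)]

lemma fh_L5 (m : ℕ) (hm : 1 ≤ m) (r : ℝ) (hr : 0 < r) (φ : ℝ → ℝ) :
    ∫ t in (-r)..r, (r ^ 2 - t ^ 2) ^ ((((m+1:ℕ) : ℝ) - 3) / 2) * φ t
     = r ^ (m-1) * ∫ a in Set.Ioo 0 Real.pi, Real.sin a ^ (m-1) * φ (r * Real.cos a) := by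
  have him : (fun a => r * Real.cos a) '' Set.Ioo 0 Real.pi = Set.Ioo (-r) r := by
    ext t
    constructor
    · rintro ⟨a, ha, rfl⟩
      have h1 : Real.cos a < 1 := by
        have := Real.strictAntiOn_cos (Set.left_mem_Icc.2 Real.pi_pos.le) ⟨ha.1.le, ha.2.le⟩ ha.1
        simpa using this
      have h2 : -1 < Real.cos a := by
        have := Real.strictAntiOn_cos ⟨ha.1.le, ha.2.le⟩ (Set.right_mem_Icc.2 Real.pi_pos.le) ha.2
        simpa using this
      constructor <;> simp only <;> nlinarith
    · rintro ⟨h1, h2⟩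
      have h3 : -1 < t / r := by rw [lt_div_iff₀ hr]; linarith
      have h4 : t / r < 1 := by rw [div_lt_iff₀ hr]; linarith
      refine ⟨Real.arccos (t/r), ⟨Real.arccos_pos.2 h4, ?_⟩, ?_⟩
      · refine lt_of_le_of_ne (Real.arccos_le_pi _) fun h => ?_
        rw [Real.arccos_eq_pi] at h; linarith
      · simp only [Real.cos_arccos h3.le h4.le]; field_simp
  have hinj : Set.InjOn (fun a => r * Real.cos a) (Set.Ioo 0 Real.pi) := by
    intro a ha b hb h
    exact Real.injOn_cos ⟨ha.1.le, ha.2.le⟩ ⟨hb.1.le, hb.2.le⟩ (mul_left_cancel₀ hr.ne' h)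
  rw [intervalIntegral.integral_of_le (by linarith), integral_Ioc_eq_integral_Ioo, ← him,
    integral_image_eq_integral_abs_deriv_smul (f' := fun a => r * (- Real.sin a)) measurableSet_Ioo
      (fun a _ => ((Real.hasDerivAt_cos a).const_mul r).hasDerivWithinAt) hinj,
    ← integral_const_mul]
  refine setIntegral_congr_fun measurableSet_Ioo fun a ha => ?_
  have hs : 0 < Real.sin a := Real.sin_pos_of_pos_of_lt_pi ha.1 ha.2
  have hrs : 0 < r * Real.sin a := by positivity
  have e1 : r^2 - (r * Real.cos a)^2 = (r * Real.sin a)^(2:ℝ) := by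
    rw [Real.rpow_two]; nlinarith [Real.sin_sq_add_cos_sq a]
  have e2 : |r * (-Real.sin a)| = r * Real.sin a := by
    rw [mul_neg, abs_neg, abs_of_pos hrs]
  simp only [e1, e2, smul_eq_mul]
  rw [← Real.rpow_mul hrs.le]
  have e3 : (r * Real.sin a) * (r * Real.sin a) ^ (2 * ((((m+1:ℕ) : ℝ) - 3) / 2)) = (r * Real.sin a)^(m-1) := by
    nth_rewrite 1 [← Real.rpow_one (r * Real.sin a)]
    rw [← Real.rpow_add hrs, ← Real.rpow_natCast, Nat.cast_sub hm]
    congr 1; push_cast; ring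
  rw [← mul_assoc, e3, mul_pow]; ring

lemma fh_gauss (k : ℕ) : Integrable (fun s : ℝ => s ^ k * Real.exp (-s^2)) := by
  have := integrable_rpow_mul_exp_neg_mul_sq (b := 1) one_pos (s := k)
    (by have : (0:ℝ) ≤ k := Nat.cast_nonneg k
        linarith)
  simpa using this

lemma fh_gauss_pos (k : ℕ) : 0 < ∫ s in Set.Ioi (0:ℝ), s ^ k * Real.exp (-s^2) := by
  rw [setIntegral_pos_iff_support_of_nonneg_ae]
  · refine lt_of_lt_of_le (b := volume (Set.Ioi (0:ℝ))) (by simp) (measure_mono fun s hs => ?_)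
    have : 0 < s := hs
    refine ⟨?_, hs⟩
    simp only [Function.mem_support]
    positivity
  · filter_upwards [ae_restrict_mem measurableSet_Ioi] with s hs
    have : 0 < s := hs
    simp only [Pi.zero_apply]
    positivity
  · exact (fh_gauss k).integrableOn

lemma fh_bound (r : ℝ) (hr : 0 < r) (φ : ℝ → ℝ) (hφ : Continuous φ) :
    ∃ C, ∀ t q : ℝ, ‖φ (r * t / √(t^2 + q^2))‖ ≤ C := by
  obtain ⟨C, hC⟩ := (isCompact_Icc (a := -r) (b := r)).exists_bound_of_continuousOn hφ.continuousOn
  refine ⟨C, fun t q => hC _ ?_⟩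
  have h : |t| ≤ √(t^2+q^2) := Real.abs_le_sqrt (by nlinarith [sq_nonneg q])
  have h2 : |r * t / √(t^2 + q^2)| ≤ r := by
    rw [abs_div, abs_mul, abs_of_pos hr, abs_of_nonneg (Real.sqrt_nonneg _)]
    exact div_le_of_le_mul₀ (Real.sqrt_nonneg _) hr.le (by gcongr)
  exact ⟨(abs_le.1 h2).1, (abs_le.1 h2).2⟩

lemma fh_L3 (m : ℕ) (hm : 1 ≤ m) (r : ℝ) (hr : 0 < r) (φ : ℝ → ℝ) (hφ : Continuous φ) :
    ∫ p : ℝ × EuclideanSpace ℝ (Fin m), φ (r * p.1 / √(p.1^2 + ‖p.2‖^2)) *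
        Real.exp (-(p.1^2+‖p.2‖^2)) =
    (((volume : Measure (EuclideanSpace ℝ (Fin m))).toSphere Set.univ).toReal) *
      ∫ t : ℝ, ∫ q in Set.Ioi (0:ℝ), q ^ (m-1) * (φ (r * t / √(t^2 + q^2)) *
        Real.exp (-(t^2+q^2))) := by
  obtain ⟨C, hC⟩ := fh_bound r hr φ hφ
  haveI : Nonempty (Fin m) := ⟨⟨0, hm⟩⟩
  have hz : Integrable (fun z : EuclideanSpace ℝ (Fin m) => Real.exp (-‖z‖^2)) := by
    rw [integrable_fun_norm_addHaar volume (f := fun s => Real.exp (-s^2))]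
    exact (fh_gauss _).integrableOn
  have ht : Integrable (fun t : ℝ => Real.exp (-t^2)) := by simpa using fh_gauss 0
  have hφm := hφ.measurable
  have hI : Integrable (fun p : ℝ × EuclideanSpace ℝ (Fin m) =>
      φ (r * p.1 / √(p.1^2 + ‖p.2‖^2)) * Real.exp (-(p.1^2+‖p.2‖^2))) (volume.prod volume) := by
    have h1 := (ht.mul_prod hz).bdd_mul (c := C)
      (f := fun p : ℝ × EuclideanSpace ℝ (Fin m) => φ (r * p.1 / √(p.1^2 + ‖p.2‖^2)))
      (Measurable.aestronglyMeasurable (by fun_prop)) (.of_forall fun p => hC _ _)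
    refine h1.congr (.of_forall fun p => ?_)
    simp only [neg_add, Real.exp_add]
  rw [Measure.volume_eq_prod, integral_prod _ hI, ← integral_const_mul]
  refine integral_congr_ae (.of_forall fun t => ?_)
  simp only
  rw [integral_fun_norm_addHaar volume (fun q => φ (r * t / √(t^2 + q^2)) *
        Real.exp (-(t^2+q^2))), ← Measure.real, Measure.toSphere_real_apply_univ]
  simp [mul_assoc]

lemma fh_L4 (m : ℕ) (hm : 1 ≤ m) (r : ℝ) (hr : 0 < r) (φ : ℝ → ℝ) (hφ : Continuous φ) :
    ∫ t : ℝ, ∫ q in Set.Ioi (0:ℝ), q ^ (m-1) * (φ (r * t / √(t^2 + q^2)) *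
        Real.exp (-(t^2+q^2))) =
    (∫ s in Set.Ioi (0:ℝ), s ^ m * Real.exp (-s^2)) *
      ∫ a in Set.Ioo 0 Real.pi, Real.sin a ^ (m-1) * φ (r * Real.cos a) := by
  obtain ⟨C, hC⟩ := fh_bound r hr φ hφ
  have ht : Integrable (fun t : ℝ => Real.exp (-t^2)) := by simpa using fh_gauss 0
  have hφm := hφ.measurable
  set G : ℝ × ℝ → ℝ := fun p => p.2 ^ (m-1) * (φ (r * p.1 / √(p.1^2 + p.2^2)) *
        Real.exp (-(p.1^2+p.2^2))) with hG
  have hI : Integrable G (volume.prod (volume.restrict (Set.Ioi 0))) := by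
    have h1 := (ht.mul_prod ((fh_gauss (m-1)).integrableOn (s := Set.Ioi 0))).bdd_mul (c := C)
      (f := fun p : ℝ × ℝ => φ (r * p.1 / √(p.1^2 + p.2^2)))
      (Measurable.aestronglyMeasurable (by fun_prop)) (.of_forall fun p => hC _ _)
    refine h1.congr (.of_forall fun p => ?_)
    simp only [hG, neg_add, Real.exp_add]
    ring
  have h2 := integral_prod G hI
  simp only [hG] at h2
  rw [← h2]
  have h3 : (volume : Measure ℝ).prod (volume.restrict (Set.Ioi (0:ℝ))) =
      (volume : Measure (ℝ × ℝ)).restrict (Set.univ ×ˢ Set.Ioi 0) := by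
    rw [Measure.volume_eq_prod, ← Measure.prod_restrict, Measure.restrict_univ]
  have hms : MeasurableSet ((Set.univ : Set ℝ) ×ˢ Set.Ioi (0:ℝ)) :=
    MeasurableSet.univ.prod measurableSet_Ioi
  rw [h3, ← integral_indicator hms, ← integral_comp_polarCoord_symm]
  have h4 : ∫ a in Set.Ioo 0 Real.pi, Real.sin a ^ (m-1) * φ (r * Real.cos a) =
      ∫ a in Set.Ioo (-Real.pi) Real.pi, (Set.Ioi (0:ℝ)).indicator
        (fun a => Real.sin a ^ (m-1) * φ (r * Real.cos a)) a := by
    rw [setIntegral_indicator measurableSet_Ioi]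
    congr 2
    ext a
    simp only [Set.mem_Ioo, Set.mem_inter_iff, Set.mem_Ioi]
    constructor
    · rintro ⟨h, h'⟩; exact ⟨⟨by linarith, h'⟩, h⟩
    · rintro ⟨⟨_, h'⟩, h⟩; exact ⟨h, h'⟩
  rw [h4, ← setIntegral_prod_mul, polarCoord_target, ← Measure.volume_eq_prod]
  refine setIntegral_congr_fun (measurableSet_Ioi.prod measurableSet_Ioo) ?_
  rintro ⟨s, a⟩ ⟨hs, ha⟩
  have hs : 0 < s := hs
  have ha : -Real.pi < a ∧ a < Real.pi := ha
  simp only [polarCoord_symm_apply, smul_eq_mul]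
  by_cases h0 : 0 < a
  · have hsin : 0 < Real.sin a := Real.sin_pos_of_pos_of_lt_pi h0 ha.2
    rw [Set.indicator_of_mem (by simpa using (by positivity : 0 < s * Real.sin a)),
      Set.indicator_of_mem (by simpa using h0)]
    have e1 : (s * Real.cos a)^2 + (s * Real.sin a)^2 = s^2 := by
      nlinarith [Real.sin_sq_add_cos_sq a]
    have e2 : r * (s * Real.cos a) / s = r * Real.cos a := by field_simp
    simp only [e1, Real.sqrt_sq hs.le, e2]
    obtain ⟨k, rfl⟩ : ∃ k, m = k + 1 := ⟨m - 1, by omega⟩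
    simp only [Nat.add_sub_cancel]
    ring
  · have hsin : Real.sin a ≤ 0 := Real.sin_nonpos_of_nonpos_of_neg_pi_le (not_lt.1 h0) ha.1.le
    rw [Set.indicator_of_notMem (by simpa using mul_nonpos_of_nonneg_of_nonpos hs.le hsin),
      Set.indicator_of_notMem (by simpa using h0)]
    simp

/-- Funk–Hecke identity: for `n ≥ 2`, `x ∈ ℝⁿ \ {0}` and continuous `φ : ℝ → ℝ`,
`∫_{S^{n-1}} φ(x·θ) dS(θ) = |S^{n-2}| |x|^{2-n} ∫_{-|x|}^{|x|} (|x|²-t²)^{(n-3)/2} φ(t) dt`,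
with `|S^{n-2}|` the surface measure of the unit sphere in `ℝ^{n-1}`. -/
theorem stmt8 (n : ℕ) (hn : 2 ≤ n) (x : EuclideanSpace ℝ (Fin n)) (hx : x ≠ 0)
    (φ : ℝ → ℝ) (hφ : Continuous φ) :
    (∫ θ : Metric.sphere (0 : EuclideanSpace ℝ (Fin n)) 1,
        φ ⟪x, (θ : EuclideanSpace ℝ (Fin n))⟫ ∂(volume.toSphere))
    = (((volume : Measure (EuclideanSpace ℝ (Fin (n - 1)))).toSphere Set.univ).toReal) *
        ‖x‖ ^ ((2 : ℝ) - n) *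
        ∫ t in (-‖x‖)..(‖x‖), (‖x‖ ^ 2 - t ^ 2) ^ (((n : ℝ) - 3) / 2) * φ t := by
  obtain ⟨m, rfl⟩ : ∃ m, n = m + 1 := ⟨n - 1, by omega⟩
  have hm : 1 ≤ m := by omega
  have hr : 0 < ‖x‖ := norm_pos_iff.2 hx
  have key := (fh_L1 m x φ).symm.trans ((fh_L2 m x φ).trans (fh_L3 m hm _ hr φ hφ))
  rw [fh_L4 m hm _ hr φ hφ] at key
  have hpow : ‖x‖ ^ ((2:ℝ) - ((m+1 : ℕ) : ℝ)) * ‖x‖ ^ (m-1) = 1 := by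
    rw [← Real.rpow_natCast, Nat.cast_sub hm, ← Real.rpow_add hr]
    have : (2:ℝ) - ((m+1 : ℕ) : ℝ) + ((m:ℝ) - (1:ℕ)) = 0 := by push_cast; ring
    rw [this, Real.rpow_zero]
  rw [fh_L5 m hm _ hr φ, mul_assoc, ← mul_assoc (‖x‖ ^ _), hpow, one_mul]
  apply mul_right_cancel₀ (fh_gauss_pos m).ne'
  rw [key, Nat.add_sub_cancel]
  ring
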